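/- arXiv:1710.01599 — 2 statements merged into one kernel-verified Lean document; each statement's English description precedes it below -/
import Mathlib

section
/- Let A₁, A₂, B₁, B₂, C be unital C*-algebras, Φ : A₁ → A₂ and Ψ : B₁ → B₂ unital completely positive maps, and Λ : A₂ ⊗_alg B₂ → C a Schwarz channel. Then Λ ∘ (Φ ⊗ Ψ) : A₁ ⊗_alg B₁ → C is a Schwarz channel. -/
/-!
Write `x = ∑ aᵢ ⊗ bᵢ` and `T = Φ ⊗ Ψ`. With `Δ_Φ i j = Φ (aᵢ* aⱼ) - Φ(aᵢ)* Φ(aⱼ)` and likewise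
`Δ_Ψ`, one has

`T (x* x) - T(x)* T(x) = ∑ Δ_Φ i j ⊗ Ψ (bᵢ* bⱼ) + ∑ Φ(aᵢ)* Φ(aⱼ) ⊗ Δ_Ψ i j`.

Complete positivity makes `Ψ (bᵢ* bⱼ)` a positive matrix, and `Δ_Φ`, `Δ_Ψ` are Schur complements of
such matrices, hence positive too. A positive matrix over a C⋆-algebra has the form `R* R`, so, as
in the Schur product theorem, both sums are sums of squares `y* y` in `A₂ ⊗ B₂`. The Schwarz
inequality for `Λ` makes `Λ` nonnegative on these and bounds `Λ(T x)* Λ(T x)` by `Λ (T(x)* T(x))`.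
-/

open Matrix

section PositiveMatrices

theorem star_apply_eq_of_isSelfAdjoint_apply_self {E F : Type*} [AddCommGroup E] [Module ℂ E]
    [AddCommGroup F] [StarAddMonoid F] [Module ℂ F] [StarModule ℂ F]
    (s : E →ₗ⋆[ℂ] E →ₗ[ℂ] F) (hs : ∀ x, IsSelfAdjoint (s x x)) (x y : E) :
    star (s x y) = s y x := by
  have symmetric_part (u v : E) : star (s u v) + star (s v u) = s u v + s v u := by
    have h := (hs (u + v)).star_eq
    simp only [map_add, LinearMap.add_apply, star_add, (hs _).star_eq] at h
    linear_combination (norm := module) h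
  have antisymmetric_part : star (s x y) - star (s y x) = s y x - s x y := by
    have h := symmetric_part x (Complex.I • y)
    simp only [map_smul, map_smulₛₗ, LinearMap.smul_apply, star_smul, map_neg, Complex.star_def,
      Complex.conj_I] at h
    have hI := congrArg (Complex.I • ·) h
    simp only [smul_add, smul_smul, mul_neg, Complex.I_mul_I] at hI
    linear_combination (norm := module) hI
  linear_combination (norm := module) (1 / 2 : ℂ) • (symmetric_part x y + antisymmetric_part)

variable {n A : Type*} [Fintype n]

theorem isHermitian_of_dotProduct_mulVec_nonneg [Ring A] [StarRing A] [PartialOrder A]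
    [StarOrderedRing A] [Algebra ℂ A] [StarModule ℂ A] {M : Matrix n n A}
    (hM : ∀ b : n → A, 0 ≤ star b ⬝ᵥ M *ᵥ b) : M.IsHermitian := by
  classical
  let form : (n → A) →ₗ⋆[ℂ] (n → A) →ₗ[ℂ] A :=
    LinearMap.mk₂'ₛₗ (starRingEnd ℂ) (RingHom.id ℂ) (fun b c ↦ star b ⬝ᵥ M *ᵥ c)
      (fun _ _ _ ↦ by rw [star_add, add_dotProduct])
      (fun _ _ _ ↦ by rw [star_smul, smul_dotProduct, starRingEnd_apply])
      (fun _ _ _ ↦ by rw [mulVec_add, dotProduct_add])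
      (fun _ _ _ ↦ by rw [mulVec_smul, dotProduct_smul, RingHom.id_apply])
  ext i j
  have h := star_apply_eq_of_isSelfAdjoint_apply_self form (fun b ↦ .of_nonneg (hM b))
    (Pi.single j 1) (Pi.single i 1)
  simpa [form] using h

theorem eq_zero_of_posSemidef_neg_conjTranspose_mul_self {m n A : Type*} [Fintype m]
    [CStarAlgebra A] [PartialOrder A] [StarOrderedRing A] {V : Matrix m n A}
    (hV : (-(Vᴴ * V)).PosSemidef) : V = 0 := by
  ext k j
  have square_nonneg (k : m) : 0 ≤ star (V k j) * V k j := star_mul_self_nonneg _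
  have sum_nonpos : ∑ k, star (V k j) * V k j ≤ 0 := neg_nonneg.mp hV.diag_nonneg
  have sum_eq_zero := sum_nonpos.antisymm (Finset.sum_nonneg fun k _ ↦ square_nonneg k)
  rw [Finset.sum_eq_zero_iff_of_nonneg fun k _ ↦ square_nonneg k] at sum_eq_zero
  exact (CStarRing.star_mul_self_eq_zero_iff _).mp (sum_eq_zero k (Finset.mem_univ k))

theorem exists_eq_star_mul_self_of_conjugate_eq_neg_imp {E : Type*} [NonUnitalCStarAlgebra E]
    {x : E} (hx : IsSelfAdjoint x) (h : ∀ z v : E, star z * x * z = -(star v * v) → v = 0) :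
    ∃ y, x = star y * y := by
  let := CStarAlgebra.spectralOrder E
  let := CStarAlgebra.spectralOrderedRing E
  have hstar : star x⁻ = x⁻ := IsSelfAdjoint.of_nonneg (CFC.negPart_nonneg x)
  obtain ⟨w, hw⟩ := CStarAlgebra.nonneg_iff_eq_star_mul_self.mp (CFC.negPart_nonneg x)
  have compression : star x⁻ * x * x⁻ = -(star (w * x⁻) * (w * x⁻)) := calc
    star x⁻ * x * x⁻ = x⁻ * (x⁺ - x⁻) * x⁻ := by rw [hstar, CFC.posPart_sub_negPart x hx]
    _ = -(x⁻ * x⁻ * x⁻) := by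
      rw [mul_sub, CFC.negPart_mul_posPart, zero_sub, neg_mul]
    _ = -(x⁻ * (star w * w) * x⁻) := by rw [← hw]
    _ = -(star (w * x⁻) * (w * x⁻)) := by rw [star_mul, hstar]; simp only [mul_assoc]
  have negPart_sq : star x⁻ * x⁻ = 0 := calc
    star x⁻ * x⁻ = star w * (w * x⁻) := by rw [hstar, ← mul_assoc, ← hw]
    _ = 0 := by rw [h _ _ compression, mul_zero]
  rw [← CStarAlgebra.nonneg_iff_eq_star_mul_self, ← CFC.negPart_eq_zero_iff x hx]
  exact (CStarRing.star_mul_self_eq_zero_iff _).mp negPart_sq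

theorem posSemidef_iff_exists_eq_conjTranspose_mul_self [CStarAlgebra A] [PartialOrder A]
    [StarOrderedRing A] {M : Matrix n n A} :
    M.PosSemidef ↔ ∃ R : Matrix n n A, M = Rᴴ * R := by
  constructor
  · intro hM
    refine exists_eq_star_mul_self_of_conjugate_eq_neg_imp (E := CStarMatrix n n A)
      hM.isHermitian fun Z V hZ ↦ ?_
    let V' : Matrix n n A := CStarMatrix.ofMatrix.symm V
    have neg_square : (-(V'ᴴ * V')).PosSemidef :=
      hZ ▸ hM.conjTranspose_mul_mul_same (CStarMatrix.ofMatrix.symm Z)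
    exact eq_zero_of_posSemidef_neg_conjTranspose_mul_self neg_square
  · rintro ⟨R, rfl⟩
    exact posSemidef_conjTranspose_mul_self R

end PositiveMatrices

theorem posSemidef_sub_conjTranspose_mul_self_of_fromBlocks_one {m n R : Type*} [Fintype m]
    [Finite n] [DecidableEq m] [Ring R] [StarRing R] [PartialOrder R] {C : Matrix m n R}
    {D : Matrix n n R} (h : (fromBlocks 1 C Cᴴ D).PosSemidef) : (D - Cᴴ * C).PosSemidef := by
  classical
  have := Fintype.ofFinite n
  have conjugated := h.conjTranspose_mul_mul_same (fromRows (-C) (1 : Matrix n n R))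
  rw [Matrix.mul_assoc, fromBlocks_mul_fromRows,
    conjTranspose_fromRows_eq_fromCols_conjTranspose, fromCols_mul_fromRows] at conjugated
  simpa [sub_eq_neg_add] using conjugated

section CompletelyPositive

variable {A B : Type*} [Ring A] [StarRing A] [Algebra ℂ A]
  [Ring B] [StarRing B] [PartialOrder B] [Algebra ℂ B]

/-- Complete positivity of `Φ`, expressed through the `B`-valued quadratic forms of the matrices
`Φ (aᵢ* aⱼ)`, which makes sense for *-algebras without reference to norms on matrix algebras. -/
def IsCompletelyPositive (Φ : A →ₗ[ℂ] B) : Prop :=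
  ∀ (n : ℕ) (a : Fin n → A) (b : Fin n → B),
    0 ≤ ∑ i, ∑ j, star (b i) * Φ (star (a i) * a j) * b j

/-- The matrix `Φ (aᵢ* aⱼ)`: the image under the amplification of `Φ` of the positive matrix
`aᵢ* aⱼ`. -/
def gramMatrix {ι : Type*} (Φ : A →ₗ[ℂ] B) (a : ι → A) : Matrix ι ι B :=
  of fun i j ↦ Φ (star (a i) * a j)

namespace IsCompletelyPositive

variable [StarOrderedRing B] [StarModule ℂ B] {Φ : A →ₗ[ℂ] B}

theorem posSemidef_gramMatrix {ι : Type*} [Finite ι] (hΦ : IsCompletelyPositive Φ) (a : ι → A) :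
    (gramMatrix Φ a).PosSemidef := by
  obtain ⟨n, ⟨e⟩⟩ := Finite.exists_equiv_fin ι
  rw [← posSemidef_submatrix_equiv e.symm]
  have form_nonneg (b : Fin n → B) :
      0 ≤ star b ⬝ᵥ (gramMatrix Φ a).submatrix e.symm e.symm *ᵥ b := by
    simpa only [dotProduct, mulVec, Finset.mul_sum, mul_assoc] using! hΦ n (a ∘ e.symm) b
  exact .of_dotProduct_mulVec_nonneg (isHermitian_of_dotProduct_mulVec_nonneg form_nonneg)
    form_nonneg

theorem map_star (hΦ : IsCompletelyPositive Φ) (x : A) : Φ (star x) = star (Φ x) := by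
  have h := (hΦ.posSemidef_gramMatrix ![1, x]).isHermitian.apply 1 0
  simpa [gramMatrix] using h.symm

theorem posSemidef_gramMatrix_sub_vecMulVec {ι : Type*} [Finite ι] (hΦ : IsCompletelyPositive Φ)
    (hΦ1 : Φ 1 = 1) (a : ι → A) :
    (gramMatrix Φ a - vecMulVec (star (Φ ∘ a)) (Φ ∘ a)).PosSemidef := by
  rw [vecMulVec_eq Unit, ← conjTranspose_replicateRow]
  apply posSemidef_sub_conjTranspose_mul_self_of_fromBlocks_one
  have gramMatrix_one_elim : gramMatrix Φ (Sum.elim (fun _ : Unit ↦ 1) a) =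
      fromBlocks 1 (replicateRow Unit (Φ ∘ a)) (replicateRow Unit (Φ ∘ a))ᴴ (gramMatrix Φ a) := by
    ext (i | i) (j | j) <;> simp [gramMatrix, hΦ1, hΦ.map_star]
  rw [← gramMatrix_one_elim]
  exact hΦ.posSemidef_gramMatrix _

end IsCompletelyPositive

end CompletelyPositive

/-- The cone of finite sums of hermitian squares `y* y`, the algebraic substitute for
positivity in a *-algebra that carries no norm or order. -/
def squareCone (D : Type*) [NonUnitalRing D] [StarRing D] : AddSubmonoid D :=
  AddSubmonoid.closure (Set.range fun y : D ↦ star y * y)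

section StarTensor

/-- `t` behaves like `(a, b) ↦ a ⊗ b`, i.e. it is the restriction to simple tensors of a unital
*-homomorphism from the algebraic tensor product. Neither injectivity nor surjectivity of that
homomorphism is included. -/
structure IsStarTensor {A B D : Type*} [Ring A] [StarRing A] [Algebra ℂ A] [Ring B] [StarRing B]
    [Algebra ℂ B] [Ring D] [StarRing D] [Algebra ℂ D] (t : A →ₗ[ℂ] B →ₗ[ℂ] D) : Prop where
  apply_one_one : t 1 1 = 1
  apply_mul_apply : ∀ (a c : A) (b d : B), t a b * t c d = t (a * c) (b * d)
  star_apply : ∀ (a : A) (b : B), star (t a b) = t (star a) (star b)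

theorem exists_sum_eq_of_span_eq_top {R A B D : Type*} [CommSemiring R] [AddCommMonoid A]
    [Module R A] [AddCommMonoid B] [Module R B] [AddCommMonoid D] [Module R D]
    {t : A →ₗ[R] B →ₗ[R] D} (ht : Submodule.span R {x : D | ∃ a b, x = t a b} = ⊤) (x : D) :
    ∃ (n : ℕ) (a : Fin n → A) (b : Fin n → B), x = ∑ i, t (a i) (b i) := by
  have span_le_range : Submodule.span R {x : D | ∃ a b, x = t a b} ≤
      LinearMap.range (TensorProduct.lift t) := by
    rw [Submodule.span_le]
    rintro _ ⟨a, b, rfl⟩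
    exact ⟨TensorProduct.tmul R a b, TensorProduct.lift.tmul a b⟩
  obtain ⟨y, rfl⟩ := span_le_range (ht ▸ Submodule.mem_top : x ∈ _)
  obtain ⟨n, a, b, rfl⟩ := TensorProduct.exists_sum_tmul_eq y
  exact ⟨n, a, b, by simp only [map_sum, TensorProduct.lift.tmul]⟩

namespace IsStarTensor

variable {A B D ι : Type*} [CStarAlgebra A] [PartialOrder A] [StarOrderedRing A]
  [CStarAlgebra B] [PartialOrder B] [StarOrderedRing B] [Ring D] [StarRing D] [Algebra ℂ D]
  [Fintype ι] {t : A →ₗ[ℂ] B →ₗ[ℂ] D}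

theorem sum_apply_mem_squareCone (ht : IsStarTensor t) {M : Matrix ι ι A} {N : Matrix ι ι B}
    (hM : M.PosSemidef) (hN : N.PosSemidef) : ∑ i, ∑ j, t (M i j) (N i j) ∈ squareCone D := by
  obtain ⟨R, rfl⟩ := posSemidef_iff_exists_eq_conjTranspose_mul_self.mp hM
  obtain ⟨S, rfl⟩ := posSemidef_iff_exists_eq_conjTranspose_mul_self.mp hN
  have sum_of_squares : ∑ i, ∑ j, t ((Rᴴ * R) i j) ((Sᴴ * S) i j) =
      ∑ q, ∑ p, star (∑ i, t (R p i) (S q i)) * ∑ i, t (R p i) (S q i) := by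
    simp only [mul_apply, conjTranspose_apply, map_sum, LinearMap.sum_apply, star_sum,
      Finset.sum_mul_sum, ht.star_apply, ht.apply_mul_apply]
    rw [Finset.sum_comm_cycle]
    exact Finset.sum_congr rfl fun q _ ↦ Finset.sum_comm_cycle
  rw [sum_of_squares]
  exact sum_mem fun q _ ↦ sum_mem fun p _ ↦ AddSubmonoid.subset_closure ⟨_, rfl⟩

theorem sum_apply_sub_sum_apply_mem_squareCone (ht : IsStarTensor t) {M M' : Matrix ι ι A}
    {N N' : Matrix ι ι B} (hM : (M - M').PosSemidef) (hM' : M'.PosSemidef)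
    (hN : N.PosSemidef) (hN' : (N - N').PosSemidef) :
    ∑ i, ∑ j, t (M i j) (N i j) - ∑ i, ∑ j, t (M' i j) (N' i j) ∈ squareCone D := by
  have telescope : ∑ i, ∑ j, t (M i j) (N i j) - ∑ i, ∑ j, t (M' i j) (N' i j) =
      ∑ i, ∑ j, t ((M - M') i j) (N i j) + ∑ i, ∑ j, t (M' i j) ((N - N') i j) := by
    simp only [Matrix.sub_apply, map_sub, LinearMap.sub_apply, Finset.sum_sub_distrib]
    abel
  rw [telescope]
  exact add_mem (ht.sum_apply_mem_squareCone hM hN) (ht.sum_apply_mem_squareCone hM' hN')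

end IsStarTensor

end StarTensor

section TensorMap

variable {A₁ A₂ B₁ B₂ D₁ D₂ : Type*}
  [Ring A₁] [StarRing A₁] [Algebra ℂ A₁] [Ring B₁] [StarRing B₁] [Algebra ℂ B₁]
  [Ring D₁] [StarRing D₁] [Algebra ℂ D₁] [Ring D₂] [StarRing D₂] [Algebra ℂ D₂]
  [CStarAlgebra A₂] [PartialOrder A₂] [StarOrderedRing A₂]
  [CStarAlgebra B₂] [PartialOrder B₂] [StarOrderedRing B₂]
  {t₁ : A₁ →ₗ[ℂ] B₁ →ₗ[ℂ] D₁} {t₂ : A₂ →ₗ[ℂ] B₂ →ₗ[ℂ] D₂}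
  {Φ : A₁ →ₗ[ℂ] A₂} {Ψ : B₁ →ₗ[ℂ] B₂} {T : D₁ →ₗ[ℂ] D₂}

theorem tensorMap_star (ht₁ : IsStarTensor t₁)
    (hspan : Submodule.span ℂ {x : D₁ | ∃ a b, x = t₁ a b} = ⊤) (ht₂ : IsStarTensor t₂)
    (hΦ : IsCompletelyPositive Φ) (hΨ : IsCompletelyPositive Ψ)
    (hT : ∀ a b, T (t₁ a b) = t₂ (Φ a) (Ψ b)) (x : D₁) : T (star x) = star (T x) := by
  obtain ⟨n, a, b, rfl⟩ := exists_sum_eq_of_span_eq_top hspan x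
  simp only [star_sum, map_sum, ht₁.star_apply, hT, ht₂.star_apply, hΦ.map_star, hΨ.map_star]

theorem tensorMap_star_mul_self_sub_mem_squareCone (ht₁ : IsStarTensor t₁)
    (hspan : Submodule.span ℂ {x : D₁ | ∃ a b, x = t₁ a b} = ⊤) (ht₂ : IsStarTensor t₂)
    (hΦ : IsCompletelyPositive Φ) (hΦ1 : Φ 1 = 1) (hΨ : IsCompletelyPositive Ψ) (hΨ1 : Ψ 1 = 1)
    (hT : ∀ a b, T (t₁ a b) = t₂ (Φ a) (Ψ b)) (x : D₁) :
    T (star x * x) - star (T x) * T x ∈ squareCone D₂ := by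
  obtain ⟨n, a, b, rfl⟩ := exists_sum_eq_of_span_eq_top hspan x
  have map_square : T (star (∑ i, t₁ (a i) (b i)) * ∑ i, t₁ (a i) (b i)) =
      ∑ i, ∑ j, t₂ (gramMatrix Φ a i j) (gramMatrix Ψ b i j) := by
    simp only [gramMatrix, of_apply, star_sum, Finset.sum_mul_sum, map_sum, ht₁.star_apply,
      ht₁.apply_mul_apply, hT]
  have square_map : star (T (∑ i, t₁ (a i) (b i))) * T (∑ i, t₁ (a i) (b i)) =
      ∑ i, ∑ j, t₂ (vecMulVec (star (Φ ∘ a)) (Φ ∘ a) i j)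
        (vecMulVec (star (Ψ ∘ b)) (Ψ ∘ b) i j) := by
    simp only [vecMulVec_apply, Pi.star_apply, Function.comp_apply, map_sum, hT, star_sum,
      Finset.sum_mul_sum, ht₂.star_apply, ht₂.apply_mul_apply]
  rw [map_square, square_map]
  exact ht₂.sum_apply_sub_sum_apply_mem_squareCone
    (hΦ.posSemidef_gramMatrix_sub_vecMulVec hΦ1 a) (posSemidef_vecMulVec_star_self _)
    (hΨ.posSemidef_gramMatrix b) (hΨ.posSemidef_gramMatrix_sub_vecMulVec hΨ1 b)

end TensorMap

section SchwarzChannel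

variable {C D : Type*} [Ring C] [StarRing C] [PartialOrder C] [Algebra ℂ C]
  [Ring D] [StarRing D] [Algebra ℂ D]

/-- A unital *-preserving linear map satisfying the Kadison–Schwarz inequality. -/
structure IsSchwarzChannel (Λ : D →ₗ[ℂ] C) : Prop where
  map_one : Λ 1 = 1
  map_star : ∀ x, Λ (star x) = star (Λ x)
  star_mul_self_le : ∀ x, star (Λ x) * Λ x ≤ Λ (star x * x)

theorem IsSchwarzChannel.map_nonneg_of_mem_squareCone [StarOrderedRing C] {Λ : D →ₗ[ℂ] C}
    (hΛ : IsSchwarzChannel Λ) {x : D} (hx : x ∈ squareCone D) : 0 ≤ Λ x := by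
  induction hx using AddSubmonoid.closure_induction with
  | mem _ h =>
    obtain ⟨y, rfl⟩ := h
    exact (star_mul_self_nonneg _).trans (hΛ.star_mul_self_le y)
  | zero => exact (map_zero Λ).ge
  | add x y _ _ hx hy => exact (map_add Λ x y).symm ▸ add_nonneg hx hy

end SchwarzChannel

theorem comp_schwarz_with_ucp_tensor_ucp_is_schwarz_general {A₁ A₂ B₁ B₂ D₁ D₂ C : Type*}
    [Ring A₁] [StarRing A₁] [Algebra ℂ A₁] [Ring B₁] [StarRing B₁] [Algebra ℂ B₁]
    [CStarAlgebra A₂] [PartialOrder A₂] [StarOrderedRing A₂]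
    [CStarAlgebra B₂] [PartialOrder B₂] [StarOrderedRing B₂]
    [Ring D₁] [StarRing D₁] [Algebra ℂ D₁] [Ring D₂] [StarRing D₂] [Algebra ℂ D₂]
    [Ring C] [StarRing C] [PartialOrder C] [StarOrderedRing C] [Algebra ℂ C]
    {t₁ : A₁ →ₗ[ℂ] B₁ →ₗ[ℂ] D₁} (ht₁ : IsStarTensor t₁)
    (hspan : Submodule.span ℂ {x : D₁ | ∃ a b, x = t₁ a b} = ⊤)
    {t₂ : A₂ →ₗ[ℂ] B₂ →ₗ[ℂ] D₂} (ht₂ : IsStarTensor t₂)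
    {Φ : A₁ →ₗ[ℂ] A₂} (hΦ1 : Φ 1 = 1) (hΦ : IsCompletelyPositive Φ)
    {Ψ : B₁ →ₗ[ℂ] B₂} (hΨ1 : Ψ 1 = 1) (hΨ : IsCompletelyPositive Ψ)
    {T : D₁ →ₗ[ℂ] D₂} (hT : ∀ a b, T (t₁ a b) = t₂ (Φ a) (Ψ b))
    {Λ : D₂ →ₗ[ℂ] C} (hΛ : IsSchwarzChannel Λ) : IsSchwarzChannel (Λ ∘ₗ T) where
  map_one := by
    rw [LinearMap.comp_apply, ← ht₁.apply_one_one, hT, hΦ1, hΨ1, ht₂.apply_one_one, hΛ.map_one]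
  map_star x := by
    simp only [LinearMap.comp_apply, tensorMap_star ht₁ hspan ht₂ hΦ hΨ hT, hΛ.map_star]
  star_mul_self_le x := calc
    star (Λ (T x)) * Λ (T x) ≤ Λ (star (T x) * T x) := hΛ.star_mul_self_le (T x)
    _ ≤ Λ (T (star x * x)) := by
      rw [← sub_nonneg, ← map_sub]
      exact hΛ.map_nonneg_of_mem_squareCone
        (tensorMap_star_mul_self_sub_mem_squareCone ht₁ hspan ht₂ hΦ hΦ1 hΨ hΨ1 hT x)

/-- Let `D₁ = A₁ ⊗_alg B₁` and `D₂ = A₂ ⊗_alg B₂` be the algebraic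
tensor products of unital C*-algebras, presented as unital *-algebras together with
bilinear tensor maps `t₁`, `t₂` satisfying the defining relations (simple tensors span,
`1 ⊗ 1 = 1`, `(a ⊗ b)(c ⊗ d) = ac ⊗ bd`, `(a ⊗ b)* = a* ⊗ b*`).
If `Φ : A₁ → A₂` and `Ψ : B₁ → B₂` are unital completely positive maps, `T = Φ ⊗ Ψ`,
and `Λ : D₂ → C` is a Schwarz channel, then `Λ ∘ (Φ ⊗ Ψ)` is a Schwarz channel. -/
theorem comp_schwarz_with_ucp_tensor_ucp_is_schwarz
    {A₁ A₂ B₁ B₂ C D₁ D₂ : Type*}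
    [CStarAlgebra A₁] [CStarAlgebra A₂] [PartialOrder A₂] [StarOrderedRing A₂] [CStarAlgebra B₁] [CStarAlgebra B₂] [PartialOrder B₂] [StarOrderedRing B₂] [CStarAlgebra C]
    [PartialOrder C] [StarOrderedRing C]
    [Ring D₁] [StarRing D₁] [Algebra ℂ D₁] [StarModule ℂ D₁]
    [Ring D₂] [StarRing D₂] [Algebra ℂ D₂] [StarModule ℂ D₂]
    (t₁ : A₁ →ₗ[ℂ] B₁ →ₗ[ℂ] D₁)
    (ht₁span : Submodule.span ℂ {x : D₁ | ∃ a b, x = t₁ a b} = ⊤)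
    (ht₁one : t₁ 1 1 = 1)
    (ht₁mul : ∀ (a c : A₁) (b d : B₁), t₁ a b * t₁ c d = t₁ (a * c) (b * d))
    (ht₁star : ∀ (a : A₁) (b : B₁), star (t₁ a b) = t₁ (star a) (star b))
    (t₂ : A₂ →ₗ[ℂ] B₂ →ₗ[ℂ] D₂)
    (ht₂span : Submodule.span ℂ {x : D₂ | ∃ a b, x = t₂ a b} = ⊤)
    (ht₂one : t₂ 1 1 = 1)
    (ht₂mul : ∀ (a c : A₂) (b d : B₂), t₂ a b * t₂ c d = t₂ (a * c) (b * d))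
    (ht₂star : ∀ (a : A₂) (b : B₂), star (t₂ a b) = t₂ (star a) (star b))
    (Φ : A₁ →ₗ[ℂ] A₂) (hΦ1 : Φ 1 = 1)
    (hΦcp : ∀ (n : ℕ) (a : Fin n → A₁) (b : Fin n → A₂),
      0 ≤ ∑ i, ∑ j, star (b i) * Φ (star (a i) * a j) * b j)
    (Ψ : B₁ →ₗ[ℂ] B₂) (hΨ1 : Ψ 1 = 1)
    (hΨcp : ∀ (n : ℕ) (a : Fin n → B₁) (b : Fin n → B₂),
      0 ≤ ∑ i, ∑ j, star (b i) * Ψ (star (a i) * a j) * b j)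
    (T : D₁ →ₗ[ℂ] D₂) (hT : ∀ (a : A₁) (b : B₁), T (t₁ a b) = t₂ (Φ a) (Ψ b))
    (Λ : D₂ →ₗ[ℂ] C) (hΛ1 : Λ 1 = 1)
    (hΛstar : ∀ x : D₂, Λ (star x) = star (Λ x))
    (hΛsch : ∀ x : D₂, star (Λ x) * Λ x ≤ Λ (star x * x)) :
    (Λ ∘ₗ T) 1 = 1 ∧ (∀ x : D₁, (Λ ∘ₗ T) (star x) = star ((Λ ∘ₗ T) x)) ∧
      ∀ x : D₁, star ((Λ ∘ₗ T) x) * (Λ ∘ₗ T) x ≤ (Λ ∘ₗ T) (star x * x) :=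
  have h := comp_schwarz_with_ucp_tensor_ucp_is_schwarz_general ⟨ht₁one, ht₁mul, ht₁star⟩ ht₁span
    ⟨ht₂one, ht₂mul, ht₂star⟩ hΦ1 hΦcp hΨ1 hΨcp hT ⟨hΛ1, hΛstar, hΛsch⟩
  ⟨h.map_one, h.map_star, h.star_mul_self_le⟩
end

section
/- Let A be a unital C*-algebra, B a unital C*-subalgebra of A, and E : A → B a conditional expectation, i.e., a linear map with E(b) = b for all b ∈ B and ‖E(a)‖ ≤ ‖a‖ for all a ∈ A. Then (Tomiyama) E satisfies the bimodule property E(b₁ a b₂) = b₁ E(a) b₂ for all a ∈ A and b₁, b₂ ∈ B, and E is completely positive. -/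
/-!
Contractivity makes `E` local: if `b ∈ B` and `b * z = 0`, then `b * E z = 0`, because adding to
`z` a large multiple of `w = star b * b * E z`, which is orthogonal to `z`, would otherwise make
`‖E z + t • w‖` exceed `‖z + t • w‖`. For self-adjoint `b ∈ B`, let `G p` be the value of the
defect `b ↦ E (b * a) - b * E a` at the truncation `max b p`. By locality the increments of `G` are
orthogonal to its later values, so `star G * G` has zero derivative and `G` is constant; it vanishes
once `max b p` is a scalar. A unital contraction is positive, hence commutes with `star`, which
gives compatibility with right multiplication.

For complete positivity, the bimodule property turns the quadratic form of the matrix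
`E (star (x i) * x j)` on `B ^ n` into `E (star v * v) ≥ 0` with `v = ∑ i, x i * z i`. Hence this
matrix is positive over `B`, so of the form `star S * S`, and its form is nonnegative on `A ^ n`.
-/

theorem eq_of_norm_sub_le_mul_sq {F : Type*} [NormedAddCommGroup F] [NormedSpace ℝ F]
    {f : ℝ → F} {C : ℝ} (hf : ∀ p q, ‖f p - f q‖ ≤ C * (p - q) ^ 2) (p q : ℝ) : f p = f q := by
  have hderiv (x : ℝ) : HasDerivAt f 0 x := by
    have hbigO : (fun y ↦ f y - f x) =O[nhds x] fun y ↦ ‖y - x‖ ^ 2 :=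
      .of_bound C <| .of_forall fun y ↦ by simpa using hf y x
    have hsub : HasFDerivAt (𝕜 := ℝ) (fun y ↦ f y - f x) 0 x := hbigO.hasFDerivAt one_lt_two
    simpa using (hsub.add_const (f x)).hasDerivAt
  exact is_const_of_deriv_eq_zero (fun x ↦ (hderiv x).differentiableAt)
    (fun x ↦ (hderiv x).deriv) p q

theorem eq_zero_of_forall_smul_le {M : Type*} [AddCommGroup M] [Module ℝ M] [PartialOrder M]
    [IsOrderedAddMonoid M] [PosSMulMono ℝ M] [TopologicalSpace M] [OrderClosedTopology M]
    [ContinuousSMul ℝ M] {k m : M} (h : ∀ t : ℝ, t • k ≤ m) : k = 0 := by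
  have nonpos_of_bounded {k : M} (h : ∀ t : ℝ, t • k ≤ m) : k ≤ 0 := by
    have hlim : Filter.Tendsto (fun t : ℝ ↦ t⁻¹ • m) Filter.atTop (nhds 0) := by
      simpa using (tendsto_inv_atTop_zero (𝕜 := ℝ)).smul_const m
    refine ge_of_tendsto hlim ?_
    filter_upwards [Filter.eventually_gt_atTop 0] with t ht
    simpa [smul_smul, ht.ne'] using smul_le_smul_of_nonneg_left (h t) (inv_nonneg.2 ht.le)
  exact le_antisymm (nonpos_of_bounded h)
    (neg_nonpos.1 <| nonpos_of_bounded fun t ↦ by simpa using h (-t))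

section Orthogonal

theorem star_add_mul_add_of_star_mul_eq_zero {R : Type*} [NonUnitalSemiring R] [StarRing R]
    {x y : R} (h : star x * y = 0) :
    star (x + y) * (x + y) = star x * x + star y * y := by
  have h' : star y * x = 0 := by simpa using congrArg star h
  simp only [star_add, add_mul, mul_add, h, h', add_zero, zero_add]

variable {A : Type*} [NonUnitalNormedRing A] [StarRing A] [CStarRing A]

theorem norm_add_sq_le_of_star_mul_eq_zero {x y : A} (h : star x * y = 0) :
    ‖x + y‖ ^ 2 ≤ ‖x‖ ^ 2 + ‖y‖ ^ 2 := by
  simp only [sq, ← CStarRing.norm_star_mul_self, star_add_mul_add_of_star_mul_eq_zero h]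
  exact norm_add_le _ _

/- `star G * G` changes by the square of an increment of `G`, so its derivative is zero. -/
theorem eq_of_lipschitzWith_of_star_mul_sub_eq_zero [NormedSpace ℝ A] {G : ℝ → A} {K : NNReal}
    (hG : LipschitzWith K G)
    (horth : ∀ p q r, p < q → q < r → star (G r) * (G p - G q) = 0) (p q : ℝ) : G p = G q := by
  have horth_le {p q : ℝ} (hpq : p ≤ q) : star (G q) * (G p - G q) = 0 := by
    rcases hpq.eq_or_lt with rfl | hlt
    · simp
    have hcont : Continuous fun r ↦ star (G r) * (G p - G q) := by
      have := hG.continuous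
      fun_prop
    have hmem : Filter.Tendsto (fun r ↦ star (G r) * (G p - G q)) (nhdsWithin q (Set.Ioi q))
      (nhds (star (G q) * (G p - G q))) := hcont.continuousWithinAt
    refine tendsto_nhds_unique_of_eventuallyEq hmem tendsto_const_nhds ?_
    filter_upwards [self_mem_nhdsWithin] with r hr using horth p q r hlt hr
  have hincr {p q : ℝ} (hpq : p ≤ q) :
      star (G p) * G p - star (G q) * G q = star (G p - G q) * (G p - G q) := by
    rw [sub_eq_iff_eq_add', ← star_add_mul_add_of_star_mul_eq_zero (horth_le hpq),
      add_sub_cancel]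
  have hsq (p q : ℝ) : ‖star (G p) * G p - star (G q) * G q‖ ≤ K ^ 2 * (p - q) ^ 2 := by
    wlog hpq : p ≤ q generalizing p q
    · rw [norm_sub_rev, ← sub_sq_comm]
      exact this q p (le_of_not_ge hpq)
    rw [hincr hpq, CStarRing.norm_star_mul_self, ← sq, ← sq_abs (p - q), ← mul_pow]
    gcongr
    simpa [dist_eq_norm] using hG.dist_le_mul p q
  wlog hpq : p ≤ q generalizing p q
  · exact (this q p (le_of_not_ge hpq)).symm
  have hzero := hincr hpq
  rw [eq_of_norm_sub_le_mul_sq hsq p q, sub_self] at hzero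
  exact sub_eq_zero.1 (CStarRing.star_mul_self_eq_zero_iff _ |>.1 hzero.symm)

end Orthogonal

theorem eq_zero_of_norm_add_smul_le {A : Type*} [NonUnitalCStarAlgebra A] [PartialOrder A]
    [StarOrderedRing A] {w y z : A} {c : ℝ} (hc : 0 ≤ c) (hsa : IsSelfAdjoint (star w * y))
    (hle : star w * w ≤ c • (star w * y)) (horth : star w * z = 0)
    (hnorm : ∀ t : ℝ, ‖y + t • w‖ ≤ ‖z + t • w‖) : w = 0 := by
  have hupper (t : ℝ) : ‖y + t • w‖ ^ 2 ≤ t ^ 2 * ‖w‖ ^ 2 + ‖z‖ ^ 2 := by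
    have horth' : star (t • w) * z = 0 := by rw [star_smul, smul_mul_assoc, horth, smul_zero]
    calc ‖y + t • w‖ ^ 2 ≤ ‖t • w + z‖ ^ 2 := by rw [add_comm _ z]; gcongr; exact hnorm t
      _ ≤ ‖t • w‖ ^ 2 + ‖z‖ ^ 2 := norm_add_sq_le_of_star_mul_eq_zero horth'
      _ = t ^ 2 * ‖w‖ ^ 2 + ‖z‖ ^ 2 := by rw [norm_smul, mul_pow, Real.norm_eq_abs, sq_abs]
  have hlower {t : ℝ} (ht : 0 ≤ t) : (c * t ^ 2 + 2 * t) * ‖w‖ ^ 2 ≤ c * ‖y + t • w‖ ^ 2 := by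
    have hyw : star y * w = star w * y := by simpa using hsa.star_eq
    have hop : (c * t ^ 2 + 2 * t) • (star w * w) ≤ c • (star (y + t • w) * (y + t • w)) := by
      have hexpand : c • (star (y + t • w) * (y + t • w)) - (c * t ^ 2 + 2 * t) • (star w * w)
          = c • (star y * y) + (2 * t) • (c • (star w * y) - star w * w) := by
        simp only [star_add, star_smul, star_trivial, add_mul, mul_add, smul_mul_assoc,
          mul_smul_comm, hyw]
        module
      rw [← sub_nonneg, hexpand]
      exact add_nonneg (smul_nonneg hc (star_mul_self_nonneg y))
        (smul_nonneg (by positivity) (sub_nonneg.2 hle))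
    have hcoeff : 0 ≤ c * t ^ 2 + 2 * t := by positivity
    simpa only [norm_smul, CStarRing.norm_star_mul_self, ← sq, Real.norm_of_nonneg hc,
      Real.norm_of_nonneg hcoeff] using CStarAlgebra.norm_le_norm_of_nonneg_of_le
        (smul_nonneg hcoeff (star_mul_self_nonneg w)) hop
  have hbound {t : ℝ} (ht : 0 ≤ t) : t * (2 * ‖w‖ ^ 2) ≤ c * ‖z‖ ^ 2 := by
    nlinarith [hlower ht, mul_le_mul_of_nonneg_left (hupper t) hc]
  have hnonpos : 2 * ‖w‖ ^ 2 ≤ 0 := by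
    by_contra! hpos
    obtain ⟨n, hn⟩ := exists_nat_gt (c * ‖z‖ ^ 2 / (2 * ‖w‖ ^ 2))
    exact (hbound n.cast_nonneg).not_gt ((div_lt_iff₀ hpos).1 hn)
  exact norm_eq_zero.1 (pow_eq_zero_iff two_ne_zero |>.1 (by linarith [sq_nonneg ‖w‖]))

section Contractive

theorem star_add_mul_I_smul_one_mul_self {A : Type*} [Ring A] [StarRing A] [Algebra ℂ A]
    [StarModule ℂ A] (a : A) (t : ℝ) :
    star (a + (t * Complex.I) • (1 : A)) * (a + (t * Complex.I) • (1 : A))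
      = star a * a + (2 * t) • (imaginaryPart a : A) + (t ^ 2) • (1 : A) := by
  rw [imaginaryPart_apply_coe]
  simp only [star_add, star_smul, star_one, star_mul', Complex.star_def, Complex.conj_ofReal,
    Complex.conj_I, add_mul, mul_add, smul_mul_assoc, mul_smul_comm, one_mul, mul_one]
  match_scalars <;> ring_nf <;> simp [mul_comm]

variable {A C : Type*} [CStarAlgebra A] [CStarAlgebra C]

theorem norm_add_mul_I_smul_one_sq_le {a : A} (ha : IsSelfAdjoint a) (t : ℝ) :
    ‖a + (t * Complex.I) • (1 : A)‖ ^ 2 ≤ ‖a‖ ^ 2 + t ^ 2 := by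
  rcases subsingleton_or_nontrivial A with _ | _
  · simp [Subsingleton.elim _ (0 : A), sq_nonneg]
  calc ‖a + (t * Complex.I) • (1 : A)‖ ^ 2 = ‖star a * a + (t ^ 2) • (1 : A)‖ := by
        rw [sq, ← CStarRing.norm_star_mul_self, star_add_mul_I_smul_one_mul_self, ha.imaginaryPart]
        simp
    _ ≤ ‖star a * a‖ + ‖(t ^ 2) • (1 : A)‖ := norm_add_le _ _
    _ = ‖a‖ ^ 2 + t ^ 2 := by simp [CStarRing.norm_star_mul_self, norm_smul, sq]

theorem isSelfAdjoint_map_of_norm_map_le {φ : A →ₗ[ℂ] C} (hone : φ 1 = 1)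
    (hφ : ∀ a, ‖φ a‖ ≤ ‖a‖) {a : A} (ha : IsSelfAdjoint a) : IsSelfAdjoint (φ a) := by
  let _ := CStarAlgebra.spectralOrder C
  have _ := CStarAlgebra.spectralOrderedRing C
  have hbound (t : ℝ) : t • (imaginaryPart (φ a) : C) ≤ algebraMap ℝ C (‖a‖ ^ 2) := by
    obtain ⟨s, rfl⟩ : ∃ s, t = 2 * s := ⟨t / 2, by ring⟩
    have hnorm : ‖φ a + (s * Complex.I) • (1 : C)‖ ^ 2 ≤ ‖a‖ ^ 2 + s ^ 2 := by
      refine le_trans ?_ (norm_add_mul_I_smul_one_sq_le ha s)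
      gcongr
      simpa [hone] using hφ (a + (s * Complex.I) • (1 : A))
    have hsq := (CStarAlgebra.star_mul_le_algebraMap_norm_sq
      (a := φ a + (s * Complex.I) • (1 : C))).trans (algebraMap_mono C hnorm)
    rw [star_add_mul_I_smul_one_mul_self, map_add, Algebra.algebraMap_eq_smul_one (s ^ 2)] at hsq
    exact (le_add_of_nonneg_left (star_mul_self_nonneg _)).trans (le_of_add_le_add_right hsq)
  rw [← imaginaryPart_eq_zero_iff]
  exact Subtype.ext (eq_zero_of_forall_smul_le hbound)

theorem map_nonneg_of_norm_map_le [PartialOrder A] [StarOrderedRing A] [PartialOrder C]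
    [StarOrderedRing C] {φ : A →ₗ[ℂ] C} (hone : φ 1 = 1) (hφ : ∀ a, ‖φ a‖ ≤ ‖a‖) {a : A}
    (ha : 0 ≤ a) : 0 ≤ φ a := by
  have hmap (r : ℝ) : φ (algebraMap ℝ A r) = algebraMap ℝ C r := by
    rw [Algebra.algebraMap_eq_smul_one, Algebra.algebraMap_eq_smul_one, φ.map_smul_of_tower, hone]
  have hdist : ‖algebraMap ℝ A ‖a‖ - a‖ ≤ ‖a‖ := by
    rw [CStarAlgebra.norm_le_iff_le_algebraMap _ (norm_nonneg _)
      (sub_nonneg.2 (IsSelfAdjoint.of_nonneg ha).le_algebraMap_norm_self)]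
    exact sub_le_self _ ha
  have hsa : IsSelfAdjoint (algebraMap ℝ C ‖a‖ - φ a) :=
    .sub (.algebraMap C (.all _)) (isSelfAdjoint_map_of_norm_map_le hone hφ (.of_nonneg ha))
  have hnorm : ‖algebraMap ℝ C ‖a‖ - φ a‖ ≤ ‖a‖ := by
    simpa only [map_sub, hmap] using (hφ _).trans hdist
  simpa using hsa.le_algebraMap_norm_self.trans (algebraMap_mono C hnorm)

end Contractive

section ContinuousFunctionalCalculus

variable {A : Type*} [CStarAlgebra A]

theorem norm_cfc_max_sub_cfc_max_le (b : A) (p q : ℝ) :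
    ‖cfc (fun x : ℝ ↦ max x p) b - cfc (fun x : ℝ ↦ max x q) b‖ ≤ |p - q| := by
  rw [← cfc_sub (fun x : ℝ ↦ max x p) (fun x ↦ max x q) b]
  refine norm_cfc_le (abs_nonneg _) fun x _ ↦ ?_
  simpa only [Real.norm_eq_abs, max_comm x] using abs_max_sub_max_le_abs p q x

theorem cfc_max_eq_algebraMap {b : A} (hb : IsSelfAdjoint b) {p : ℝ} (hp : ‖b‖ ≤ p) :
    cfc (fun x : ℝ ↦ max x p) b = algebraMap ℝ A p := by
  nontriviality A
  rw [← cfc_const p b]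
  refine cfc_congr fun x hx ↦ max_eq_right ?_
  exact (le_abs_self x).trans ((spectrum.norm_le_norm_of_mem hx).trans hp)

theorem cfc_max_eq_self {b : A} (hb : IsSelfAdjoint b) {p : ℝ} (hp : p ≤ -‖b‖) :
    cfc (fun x : ℝ ↦ max x p) b = b := by
  nontriviality A
  refine (cfc_congr fun x hx ↦ max_eq_left ?_).trans (cfc_id' ℝ b)
  exact hp.trans (neg_le.1 ((neg_le_abs x).trans (spectrum.norm_le_norm_of_mem hx)))

theorem cfc_mul_cfc_max_sub_cfc_max_eq_zero {f : ℝ → ℝ} (hf : Continuous f) (b : A) {p q : ℝ}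
    (hpq : p ≤ q) (hfq : ∀ x ≤ q, f x = 0) :
    cfc f b * (cfc (fun x : ℝ ↦ max x p) b - cfc (fun x : ℝ ↦ max x q) b) = 0 := by
  rw [← cfc_sub (fun x : ℝ ↦ max x p) (fun x ↦ max x q) b, ← cfc_mul f _ b hf.continuousOn]
  refine (cfc_congr fun x _ ↦ ?_).trans (cfc_zero ℝ b)
  rcases le_total x q with hx | hx
  · simp [hfq x hx]
  · simp [hx, hpq.trans hx]

theorem one_sub_cfc_mul_cfc_max_sub_eq_zero {f : ℝ → ℝ} (hf : Continuous f) {b : A}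
    (hb : IsSelfAdjoint b) {r : ℝ} (hfr : ∀ x, r ≤ x → f x = 1) :
    (1 - cfc f b) * (cfc (fun x : ℝ ↦ max x r) b - algebraMap ℝ A r) = 0 := by
  rw [← cfc_one ℝ b, ← cfc_const r b, ← cfc_sub 1 f b continuousOn_const hf.continuousOn,
    ← cfc_sub (fun x : ℝ ↦ max x r) (fun _ ↦ r) b, ← cfc_mul _ _ b]
  refine (cfc_congr fun x _ ↦ ?_).trans (cfc_zero ℝ b)
  rcases le_total x r with hx | hx
  · simp [hx]
  · simp [hfr x hx]

end ContinuousFunctionalCalculus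

/- If `a` were not positive, conjugating it by its negative part would give a negative element. -/
theorem exists_eq_star_mul_self_of_star_mul_mul_ne_neg {A : Type*} [NonUnitalCStarAlgebra A]
    {a : A} (ha : IsSelfAdjoint a)
    (h : ∀ b c : A, star b * a * b = -(star c * c) → c = 0) : ∃ s, a = star s * s := by
  let _ := CStarAlgebra.spectralOrder A
  have _ := CStarAlgebra.spectralOrderedRing A
  have hsa : IsSelfAdjoint a⁻ := .of_nonneg (CFC.negPart_nonneg a)
  have hconj : star a⁻ * a * a⁻ = -(star a⁻ * a⁻ * a⁻) := by
    have hmul : a⁻ * a = -(a⁻ * a⁻) := by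
      nth_rw 2 [← CFC.posPart_sub_negPart a ha]
      rw [mul_sub, CFC.negPart_mul_posPart, zero_sub]
    rw [hsa.star_eq, hmul, neg_mul]
  obtain ⟨c, hc⟩ := CStarAlgebra.nonneg_iff_eq_star_mul_self.1
    (star_left_conjugate_nonneg (CFC.negPart_nonneg a) a⁻)
  have hcube : a⁻ * a⁻ * a⁻ = 0 := by
    rw [hsa.star_eq] at hc
    rw [hc, h a⁻ c (by rw [hconj, hsa.star_eq, hc]), mul_zero]
  have hsq : a⁻ * a⁻ = 0 := by
    rw [← CStarRing.star_mul_self_eq_zero_iff, star_mul, hsa.star_eq, ← mul_assoc, hcube, zero_mul]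
  have hneg : a⁻ = 0 := by rwa [← CStarRing.star_mul_self_eq_zero_iff, hsa.star_eq]
  exact CStarAlgebra.nonneg_iff_eq_star_mul_self.1 ((CFC.negPart_eq_zero_iff a ha).1 hneg)

section Matrix

variable {C : Type*} [NonUnitalCStarAlgebra C] [PartialOrder C] [StarOrderedRing C]
  {n : Type*} [Fintype n]

theorem cstarMatrix_eq_zero_of_diag_star_mul_self_nonpos {R : CStarMatrix n n C}
    (hdiag : ∀ i, (star R * R) i i ≤ 0) : R = 0 := by
  ext l i
  have hnonneg (k : n) : 0 ≤ star (R k i) * R k i := star_mul_self_nonneg _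
  have hsum : ∑ k, star (R k i) * R k i ≤ 0 := hdiag i
  exact (CStarRing.star_mul_self_eq_zero_iff _).1 <|
    (Finset.sum_eq_zero_iff_of_nonneg fun k _ ↦ hnonneg k).1
      (hsum.antisymm (Finset.sum_nonneg fun k _ ↦ hnonneg k)) l (Finset.mem_univ l)

theorem cstarMatrix_exists_eq_star_mul_self_of_forall_sum_nonneg {T : CStarMatrix n n C}
    (hT : IsSelfAdjoint T)
    (hform : ∀ y : n → C, 0 ≤ ∑ i, ∑ j, star (y i) * T i j * y j) :
    ∃ S : CStarMatrix n n C, T = star S * S := by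
  refine exists_eq_star_mul_self_of_star_mul_mul_ne_neg hT fun N R hNR ↦
    cstarMatrix_eq_zero_of_diag_star_mul_self_nonpos fun i ↦ ?_
  have hdiag : 0 ≤ (star N * T * N) i i := by
    convert hform fun j ↦ N j i using 1
    simp only [CStarMatrix.mul_apply, CStarMatrix.star_apply, Finset.sum_mul]
    exact Finset.sum_comm
  rw [hNR] at hdiag
  exact neg_nonneg.1 hdiag

end Matrix

theorem sum_star_mul_sum_star_mul_mul {R m n : Type*} [Fintype m] [Fintype n]
    [NonUnitalSemiring R] [StarRing R] (S : m → n → R) (y : n → R) :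
    ∑ i, ∑ j, star (y i) * (∑ k, star (S k i) * S k j) * y j
      = ∑ k, star (∑ i, S k i * y i) * ∑ j, S k j * y j := by
  simp only [star_sum, star_mul, Finset.sum_mul_sum]
  simp only [Finset.mul_sum, Finset.sum_mul, mul_assoc]
  exact Finset.sum_comm_cycle

theorem starOrderedRing_of_isClosed {A : Type*} [CStarAlgebra A] [PartialOrder A]
    [StarOrderedRing A] {B : StarSubalgebra ℂ A} (hB : IsClosed (B : Set A)) :
    StarOrderedRing B := by
  refine .of_nonneg_iff' (fun hbc d ↦ add_le_add_right hbc d) fun b ↦ ⟨fun hb ↦ ?_, ?_⟩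
  · have hb' : (0 : A) ≤ b := hb
    have hmem : CFC.sqrt (b : A) ∈ B := by
      rw [CFC.sqrt_eq_real_sqrt (b : A) hb']
      exact cfcₙ_mem (𝕜' := ℂ) _ b.2
    refine ⟨⟨CFC.sqrt b, hmem⟩, Subtype.ext ?_⟩
    have hsa : IsSelfAdjoint (CFC.sqrt (b : A)) := .of_nonneg (CFC.sqrt_nonneg _)
    simpa [hsa.star_eq] using (CFC.sqrt_mul_sqrt_self (b : A) hb').symm
  · rintro ⟨c, rfl⟩
    exact star_mul_self_nonneg (c : A)

/-- The failure `b ↦ E (b * a) - b * E a` of `E` to commute with left multiplication, as a linear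
function of the multiplier `b`; its vanishing on `B` is the left module property of a conditional
expectation onto `B`. -/
def moduleDefect {A : Type*} [Ring A] [Algebra ℂ A] (E : A →ₗ[ℂ] A) (a : A) : A →ₗ[ℂ] A :=
  E ∘ₗ LinearMap.mulRight ℂ a - LinearMap.mulRight ℂ (E a)

theorem moduleDefect_apply {A : Type*} [Ring A] [Algebra ℂ A] (E : A →ₗ[ℂ] A) (a b : A) :
    moduleDefect E a b = E (b * a) - b * E a :=
  rfl

theorem moduleDefect_algebraMap {A : Type*} [Ring A] [Algebra ℂ A] (E : A →ₗ[ℂ] A) (a : A)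
    (r : ℝ) : moduleDefect E a (algebraMap ℝ A r) = 0 := by
  rw [moduleDefect_apply, ← Algebra.smul_def, ← Algebra.smul_def, E.map_smul_of_tower, sub_self]

/-- `E` is a conditional expectation of `A` onto `B`: a contractive linear projection with range
`B`, regarded as a map from `A` to itself. -/
structure IsConditionalExpectation {A : Type*} [CStarAlgebra A] (B : StarSubalgebra ℂ A)
    (E : A →ₗ[ℂ] A) : Prop where
  map_mem : ∀ a, E a ∈ B
  map_eq_self : ∀ b ∈ B, E b = b
  norm_map_le : ∀ a, ‖E a‖ ≤ ‖a‖

namespace IsConditionalExpectation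

section Bimodule

variable {A : Type*} [CStarAlgebra A] {B : StarSubalgebra ℂ A} {E : A →ₗ[ℂ] A}

theorem isClosed (hE : IsConditionalExpectation B E) : IsClosed (B : Set A) := by
  have hcont : Continuous E :=
    AddMonoidHomClass.continuous_of_bound E 1 (by simpa using hE.norm_map_le)
  have hB : (B : Set A) = {a | E a = a} :=
    Set.ext fun a ↦ ⟨hE.map_eq_self a, fun ha ↦ ha ▸ hE.map_mem a⟩
  exact hB ▸ isClosed_eq hcont continuous_id

theorem map_one (hE : IsConditionalExpectation B E) : E 1 = 1 :=
  hE.map_eq_self 1 (one_mem B)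

theorem norm_map_add_le (hE : IsConditionalExpectation B E) (a : A) {b : A} (hb : b ∈ B) :
    ‖E a + b‖ ≤ ‖a + b‖ := by
  simpa only [map_add, hE.map_eq_self b hb] using hE.norm_map_le (a + b)

theorem mul_map_eq_zero (hE : IsConditionalExpectation B E) {b z : A} (hb : b ∈ B)
    (hbz : b * z = 0) : b * E z = 0 := by
  let _ := CStarAlgebra.spectralOrder A
  have _ := CStarAlgebra.spectralOrderedRing A
  set w := star b * (b * E z) with hw
  have hwB : w ∈ B := mul_mem (star_mem hb) (mul_mem hb (hE.map_mem z))
  have hwE : star w * E z = star (b * E z) * (b * E z) := by simp [hw, mul_assoc]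
  have hle : star w * w ≤ ‖b * star b‖ • (star w * E z) := by
    have hww : star w * w = star (b * E z) * (b * star b) * (b * E z) := by simp [hw, mul_assoc]
    rw [hww, hwE]
    exact CStarAlgebra.star_left_conjugate_le_norm_smul (.mul_star_self b)
  have hwz : star w * z = 0 := by simp [hw, mul_assoc, hbz]
  have hw0 : w = 0 := eq_zero_of_norm_add_smul_le (norm_nonneg _)
    (hwE ▸ IsSelfAdjoint.star_mul_self _) hle hwz
    fun t ↦ hE.norm_map_add_le z (B.smul_mem hwB (t : ℂ))
  rwa [hw0, star_zero, zero_mul, eq_comm, CStarRing.star_mul_self_eq_zero_iff] at hwE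

theorem norm_moduleDefect_le (hE : IsConditionalExpectation B E) (a b : A) :
    ‖moduleDefect E a b‖ ≤ 2 * ‖a‖ * ‖b‖ :=
  calc ‖moduleDefect E a b‖ ≤ ‖E (b * a)‖ + ‖b * E a‖ := norm_sub_le _ _
    _ ≤ ‖b‖ * ‖a‖ + ‖b‖ * ‖a‖ := by
      gcongr
      · exact (hE.norm_map_le _).trans (norm_mul_le _ _)
      · exact (norm_mul_le _ _).trans (by gcongr; exact hE.norm_map_le a)
    _ = 2 * ‖a‖ * ‖b‖ := by ring

theorem mul_moduleDefect_eq_zero (hE : IsConditionalExpectation B E) (a : A) {u b : A}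
    (hu : u ∈ B) (hub : u * b = 0) : u * moduleDefect E a b = 0 := by
  have hmap : u * E (b * a) = 0 := hE.mul_map_eq_zero hu (by rw [← mul_assoc, hub, zero_mul])
  rw [moduleDefect_apply, mul_sub, hmap, ← mul_assoc, hub, zero_mul, sub_zero]

theorem star_moduleDefect_mul_moduleDefect_eq_zero (hE : IsConditionalExpectation B E) (a : A)
    {u b c : A} (hu : u ∈ B) (husa : IsSelfAdjoint u) (hub : u * b = 0) (huc : (1 - u) * c = 0) :
    star (moduleDefect E a c) * moduleDefect E a b = 0 := by
  have hb : u * moduleDefect E a b = 0 := hE.mul_moduleDefect_eq_zero a hu hub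
  have hc : star (moduleDefect E a c) * (1 - u) = 0 := by
    simpa [husa.star_eq] using
      congrArg star (hE.mul_moduleDefect_eq_zero a (sub_mem (one_mem B) hu) huc)
  calc star (moduleDefect E a c) * moduleDefect E a b
      = star (moduleDefect E a c) * (1 - u) * moduleDefect E a b
        + star (moduleDefect E a c) * (u * moduleDefect E a b) := by noncomm_ring
    _ = 0 := by rw [hb, hc, zero_mul, mul_zero, add_zero]

theorem star_moduleDefect_cfc_max_mul_eq_zero (hE : IsConditionalExpectation B E) (a : A) {b : A}
    (hb : b ∈ B) (hbsa : IsSelfAdjoint b) {p q r : ℝ} (hpq : p < q) (hqr : q < r) :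
    star (moduleDefect E a (cfc (fun x : ℝ ↦ max x r) b)) *
      (moduleDefect E a (cfc (fun x : ℝ ↦ max x p) b)
        - moduleDefect E a (cfc (fun x : ℝ ↦ max x q) b)) = 0 := by
  have := hE.isClosed
  obtain ⟨f, hfq, hfr, -⟩ := exists_continuous_zero_one_of_isClosed isClosed_Iic isClosed_Ici
    (Set.Iic_disjoint_Ici.2 hqr.not_ge)
  have hdefect_r : moduleDefect E a (cfc (fun x : ℝ ↦ max x r) b)
      = moduleDefect E a (cfc (fun x : ℝ ↦ max x r) b - algebraMap ℝ A r) := by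
    rw [map_sub, moduleDefect_algebraMap, sub_zero]
  rw [hdefect_r, ← map_sub]
  exact hE.star_moduleDefect_mul_moduleDefect_eq_zero a (cfc_mem (𝕜' := ℂ) f hb)
    (cfc_predicate f b) (cfc_mul_cfc_max_sub_cfc_max_eq_zero f.continuous b hpq.le hfq)
    (one_sub_cfc_mul_cfc_max_sub_eq_zero f.continuous hbsa hfr)

theorem lipschitzWith_moduleDefect_cfc_max (hE : IsConditionalExpectation B E) (a b : A) :
    LipschitzWith (2 * ‖a‖₊) fun p ↦ moduleDefect E a (cfc (fun x : ℝ ↦ max x p) b) := by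
  refine .of_dist_le_mul fun p q ↦ ?_
  rw [dist_eq_norm, ← map_sub]
  refine (hE.norm_moduleDefect_le a _).trans ?_
  simp only [NNReal.coe_mul, NNReal.coe_ofNat, coe_nnnorm, Real.dist_eq]
  gcongr
  exact norm_cfc_max_sub_cfc_max_le b p q

theorem map_mul_left_of_isSelfAdjoint (hE : IsConditionalExpectation B E) (a : A) {b : A}
    (hb : b ∈ B) (hbsa : IsSelfAdjoint b) : E (b * a) = b * E a := by
  have hconst := eq_of_lipschitzWith_of_star_mul_sub_eq_zero
    (hE.lipschitzWith_moduleDefect_cfc_max a b)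
    (fun _ _ _ ↦ hE.star_moduleDefect_cfc_max_mul_eq_zero a hb hbsa) (-‖b‖) ‖b‖
  simp only [cfc_max_eq_self hbsa le_rfl, cfc_max_eq_algebraMap hbsa le_rfl,
    moduleDefect_algebraMap] at hconst
  exact sub_eq_zero.1 hconst

theorem map_mul_left (hE : IsConditionalExpectation B E) (a : A) {b : A} (hb : b ∈ B) :
    E (b * a) = b * E a := by
  have hre : (realPart b : A) ∈ B := by
    rw [realPart_apply_coe]
    exact B.smul_mem (add_mem hb (star_mem hb)) ((2⁻¹ : ℝ) : ℂ)
  have him : (imaginaryPart b : A) ∈ B := by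
    rw [imaginaryPart_apply_coe]
    exact B.smul_mem (B.smul_mem (sub_mem hb (star_mem hb)) ((2⁻¹ : ℝ) : ℂ)) _
  rw [← realPart_add_I_smul_imaginaryPart b]
  simp only [add_mul, smul_mul_assoc, map_add, map_smul,
    hE.map_mul_left_of_isSelfAdjoint a hre (realPart b).2,
    hE.map_mul_left_of_isSelfAdjoint a him (imaginaryPart b).2]

theorem map_star (hE : IsConditionalExpectation B E) (a : A) : E (star a) = star (E a) := by
  let _ := CStarAlgebra.spectralOrder A
  have _ := CStarAlgebra.spectralOrderedRing A
  exact StarHomClass.map_star (PositiveLinearMap.mk₀ E fun _ ↦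
    map_nonneg_of_norm_map_le hE.map_one hE.norm_map_le) a

theorem map_mul_right (hE : IsConditionalExpectation B E) (a : A) {b : A} (hb : b ∈ B) :
    E (a * b) = E a * b := by
  simpa only [← star_mul, hE.map_star, star_inj, star_star] using
    hE.map_mul_left (star a) (star_mem hb)

theorem map_mul_mul (hE : IsConditionalExpectation B E) (a : A) {b₁ b₂ : A} (hb₁ : b₁ ∈ B)
    (hb₂ : b₂ ∈ B) : E (b₁ * a * b₂) = b₁ * E a * b₂ := by
  rw [hE.map_mul_right _ hb₂, hE.map_mul_left _ hb₁]

end Bimodule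

section CompletelyPositive

variable {A : Type*} [CStarAlgebra A] [PartialOrder A] [StarOrderedRing A]
  {B : StarSubalgebra ℂ A} {E : A →ₗ[ℂ] A} {n : Type*} [Fintype n]

theorem sum_star_mul_map_mul_nonneg_of_mem (hE : IsConditionalExpectation B E) (x : n → A)
    {z : n → A} (hz : ∀ i, z i ∈ B) :
    0 ≤ ∑ i, ∑ j, star (z i) * E (star (x i) * x j) * z j := by
  have hsq : ∑ i, ∑ j, star (z i) * E (star (x i) * x j) * z j
      = E (star (∑ i, x i * z i) * ∑ j, x j * z j) := by
    simp only [← hE.map_mul_mul _ (star_mem (hz _)) (hz _), star_sum, star_mul,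
      Finset.sum_mul_sum, map_sum, mul_assoc]
  rw [hsq]
  exact map_nonneg_of_norm_map_le hE.map_one hE.norm_map_le (star_mul_self_nonneg _)

theorem exists_map_star_mul_eq_sum_star_mul (hE : IsConditionalExpectation B E) (x : n → A) :
    ∃ S : n → n → A, ∀ i j, E (star (x i) * x j) = ∑ k, star (S k i) * S k j := by
  have := hE.isClosed
  have := starOrderedRing_of_isClosed hE.isClosed
  let T : CStarMatrix n n B := .ofMatrix (.of fun i j ↦ ⟨E (star (x i) * x j), hE.map_mem _⟩)
  have hT : IsSelfAdjoint T := by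
    ext i j
    simp [T, CStarMatrix.star_apply, ← hE.map_star]
  have hform (z : n → B) : 0 ≤ ∑ i, ∑ j, star (z i) * T i j * z j := by
    rw [← Subtype.coe_le_coe]
    simpa [T] using hE.sum_star_mul_map_mul_nonneg_of_mem x fun i ↦ (z i).2
  obtain ⟨S, hS⟩ := cstarMatrix_exists_eq_star_mul_self_of_forall_sum_nonneg hT hform
  refine ⟨fun k i ↦ S k i, fun i j ↦ ?_⟩
  have hij := congrArg (fun M : CStarMatrix n n B ↦ (M i j : A)) hS
  simpa [T, CStarMatrix.mul_apply, CStarMatrix.star_apply] using hij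

theorem sum_star_mul_map_mul_nonneg (hE : IsConditionalExpectation B E) (x y : n → A) :
    0 ≤ ∑ i, ∑ j, star (y i) * E (star (x i) * x j) * y j := by
  obtain ⟨S, hS⟩ := hE.exists_map_star_mul_eq_sum_star_mul x
  simp only [hS, sum_star_mul_sum_star_mul_mul]
  exact Finset.sum_nonneg fun k _ ↦ star_mul_self_nonneg _

end CompletelyPositive

end IsConditionalExpectation

/-- **Tomiyama.** If `B` is a unital C*-subalgebra of a unital C*-algebra
`A` and `E : A → A` is a linear map onto `B` fixing `B` with `‖E a‖ ≤ ‖a‖`, then `E`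
satisfies the bimodule property `E (b₁ a b₂) = b₁ (E a) b₂` for `b₁, b₂ ∈ B` and `E`
is completely positive. -/
theorem tomiyama_conditional_expectation
    {A : Type*} [CStarAlgebra A] [PartialOrder A] [StarOrderedRing A]
    (B : StarSubalgebra ℂ A) (hBclosed : IsClosed (B : Set A))
    (E : A →ₗ[ℂ] A) (hrange : ∀ a : A, E a ∈ B) (hfix : ∀ b ∈ B, E b = b)
    (hcontr : ∀ a : A, ‖E a‖ ≤ ‖a‖) :
    (∀ a : A, ∀ b₁ ∈ B, ∀ b₂ ∈ B, E (b₁ * a * b₂) = b₁ * E a * b₂) ∧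
      ∀ (n : ℕ) (x : Fin n → A) (y : Fin n → A),
        0 ≤ ∑ i, ∑ j, star (y i) * E (star (x i) * x j) * y j := by
  have hE : IsConditionalExpectation B E := ⟨hrange, hfix, hcontr⟩
  exact ⟨fun a _ hb₁ _ hb₂ ↦ hE.map_mul_mul a hb₁ hb₂,
    fun _ x y ↦ hE.sum_star_mul_map_mul_nonneg x y⟩
end
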